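/- arXiv:2506.18393 — 2 statements merged into one kernel-verified Lean document; each statement's English description precedes it below -/
import Mathlib

section
/- Let M=(Q,V,δ,q₀,F) be a DFAwtl. If M accepts some input with at least #Q jumps (i.e., there exists w∈L(M) with jc_M(w) ≥ #Q), then there exist words α,β∈V* and a nonempty word x∈V⁺ such that for every n≥1 the word α·xⁿ·β belongs to L(M) and jc_M(α·xⁿ·β) ≥ n; consequently JC_M(n) ∈ Ω(n). -/
/-- A deterministic finite automaton with translucent letters (DFAwtl):
`delta` is a partial transition function, `start` the initial state,
`accept` the set of final states. -/
structure DFAwtl (Q V : Type*) where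
  delta : Q → V → Option Q
  start : Q
  accept : Set Q

namespace DFAwtl

variable {Q V : Type*}

/-- Sequential step: `(s, a·y) → (p, y)` when `δ(s,a) = p`. -/
def SeqStep (M : DFAwtl Q V) (c c' : Q × List V) : Prop :=
  ∃ a : V, c.2 = a :: c'.2 ∧ M.delta c.1 a = some c'.1

/-- Jumping step: `(s, x·a·y) ↻ (p, x·y)` when `x ≠ ε`, `δ(s,a) = p`, and
`δ(s,b)` is undefined for every letter `b` occurring in `x`. -/
def JumpStep (M : DFAwtl Q V) (c c' : Q × List V) : Prop :=
  ∃ (x y : List V) (a : V), x ≠ [] ∧ c.2 = x ++ a :: y ∧ c'.2 = x ++ y ∧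
    M.delta c.1 a = some c'.1 ∧ ∀ b ∈ x, M.delta c.1 b = none

/-- Either a sequential or a jumping step. -/
def Step (M : DFAwtl Q V) (c c' : Q × List V) : Prop :=
  M.SeqStep c c' ∨ M.JumpStep c c'

/-- Reflexive–transitive closure of sequential steps (the relation `→*`). -/
def SeqSteps (M : DFAwtl Q V) : Q × List V → Q × List V → Prop :=
  Relation.ReflTransGen M.SeqStep

/-- Reflexive–transitive closure of all steps (the relation `⊨*`). -/
def Steps (M : DFAwtl Q V) : Q × List V → Q × List V → Prop :=
  Relation.ReflTransGen M.Step

/-- `StepsN M c c' k` : configuration `c'` is reachable from `c` by a computation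
containing exactly `k` jumping steps. -/
inductive StepsN (M : DFAwtl Q V) : Q × List V → Q × List V → ℕ → Prop
  | refl (c : Q × List V) : StepsN M c c 0
  | seq {c c' c'' : Q × List V} {n : ℕ} :
      M.SeqStep c c' → StepsN M c' c'' n → StepsN M c c'' n
  | jump {c c' c'' : Q × List V} {n : ℕ} :
      M.JumpStep c c' → StepsN M c' c'' n → StepsN M c c'' (n + 1)

/-- The language accepted by `M`. -/
def lang (M : DFAwtl Q V) : Set (List V) :=
  {w | ∃ f ∈ M.accept, M.Steps (M.start, w) (f, [])}

/-- `M` accepts `w` by a computation with exactly `k` jumping steps. -/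
def AcceptsIn (M : DFAwtl Q V) (w : List V) (k : ℕ) : Prop :=
  ∃ f ∈ M.accept, M.StepsN (M.start, w) (f, []) k

/-- The jump complexity of a word: the (for a deterministic machine, unique)
number of jumping steps in an accepting computation on `w`. -/
noncomputable def jc (M : DFAwtl Q V) (w : List V) : ℕ :=
  sInf {k | M.AcceptsIn w k}

/-- The jump complexity function: the maximal number of jumps over accepted
words of length `n`. -/
noncomputable def JC (M : DFAwtl Q V) (n : ℕ) : ℕ :=
  sSup {k | ∃ w ∈ M.lang, w.length = n ∧ M.jc w = k}

/-- `JC_M` is bounded by a constant. -/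
def ConstBounded (M : DFAwtl Q V) : Prop :=
  ∃ c : ℕ, ∀ w ∈ M.lang, M.jc w ≤ c

/-- Extended (sequential) transition function on words. -/
def deltaStar (M : DFAwtl Q V) (q : Q) (w : List V) : Option Q :=
  w.foldl (fun o a => o.bind fun p => M.delta p a) (some q)

/-- A state `q` is `a`-deficient if `δ(q,a)` is undefined. -/
def Deficient (M : DFAwtl Q V) (q : Q) (a : V) : Prop :=
  M.delta q a = none

/-- The set `⟨q,a⟩` (empty when `δ(q,a)` is defined). -/
def angleSet (M : DFAwtl Q V) (q : Q) (a : V) : Set Q :=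
  {s | M.delta q a = none ∧ ∃ x : List V, x ≠ [] ∧
    M.SeqSteps (q, x) (s, []) ∧ M.Steps (s, a :: x) (q, [])}

/-- The set `[q,a]` (empty when `δ(q,a)` is defined). -/
def bracketSet (M : DFAwtl Q V) (q : Q) (a : V) : Set Q :=
  {s | M.delta q a = none ∧ ∃ x : List V, x ≠ [] ∧
    M.SeqSteps (q, x) (s, []) ∧ M.SeqSteps (s, a :: x) (q, [])}

/-- Every state of the automaton is useful. -/
def AllUseful (M : DFAwtl Q V) : Prop :=
  ∀ q : Q, (∃ x : List V, M.SeqSteps (M.start, x) (q, [])) ∧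
    (∃ (y : List V) (f : Q), f ∈ M.accept ∧ M.SeqSteps ((q : Q), y) (f, []))

/-- `δ(q,x')` is `a`-deficient for every prefix `x'` of `x`. -/
def PrefixDeficient (M : DFAwtl Q V) (q : Q) (a : V) (x : List V) : Prop :=
  ∀ x' : List V, ∀ p : Q, x' <+: x → M.deltaStar q x' = some p → M.delta p a = none

/-- `δ(q,y')` is `a`-deficient for every proper prefix `y'` of `y`. -/
def ProperPrefixDeficient (M : DFAwtl Q V) (q : Q) (a : V) (y : List V) : Prop :=
  ∀ y' : List V, ∀ p : Q, y' <+: y → y' ≠ y → M.deltaStar q y' = some p → M.delta p a = none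

/-- The condition of Claim 2: a pair `(q,a)` with `δ(q,a)` undefined, a nonempty
cycle in `q` visiting only `a`-deficient states, and an accepting path from `q`
reading a word `y` without `a` through `a`-deficient states and then an `a`. -/
def ClaimTwoCondition (M : DFAwtl Q V) (q : Q) (a : V) : Prop :=
  M.delta q a = none ∧
  (∃ x : List V, x ≠ [] ∧ M.SeqSteps (q, x) (q, []) ∧ M.PrefixDeficient q a x) ∧
  (∃ (y z : List V) (f : Q), a ∉ y ∧ f ∈ M.accept ∧
    M.SeqSteps (q, y ++ a :: z) (f, []) ∧ M.ProperPrefixDeficient q a y)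

end DFAwtl

namespace DFAwtl

variable {Q V : Type*}

/-- `p 0, p 1, …, p n = p 0` is a circuit in the transition graph of `M`,
with the `i`-th edge labelled by the letter `a i`. -/
def IsCircuit (M : DFAwtl Q V) (n : ℕ) (p : ℕ → Q) (a : ℕ → V) : Prop :=
  0 < n ∧ p n = p 0 ∧ ∀ i < n, M.delta (p i) (a i) = some (p (i + 1))

/-- The circuit is `x`-jumping: every state of the circuit from which an `x` is read
is `b`-deficient for some letter `b`, and at least one edge is labelled by a letter
other than `x`. -/
def IsXJumpingCircuit (M : DFAwtl Q V) (n : ℕ) (p : ℕ → Q) (a : ℕ → V) (x : V) : Prop :=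
  M.IsCircuit n p a ∧ (∀ i < n, a i = x → ∃ b : V, M.delta (p i) b = none) ∧
    ∃ i < n, a i ≠ x

/-- The state `q` is reachable from the initial state. -/
def ReachableState (M : DFAwtl Q V) (q : Q) : Prop :=
  ∃ u : List V, M.Steps (M.start, u) (q, [])

end DFAwtl
-- end preamble

namespace DFAwtl

variable {Q V : Type*}

theorem StepsN.trans' {M : DFAwtl Q V} {c d e : Q × List V} {m n : ℕ}
    (h : M.StepsN c d m) (h' : M.StepsN d e n) : M.StepsN c e (m + n) := by
  induction h with
  | refl c => simpa using h'
  | seq hs _ ih => exact .seq hs (ih h')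
  | jump hs _ ih =>
    have := StepsN.jump hs (ih h')
    rwa [Nat.add_right_comm] at this

theorem StepsN.steps {M : DFAwtl Q V} {c d : Q × List V} {m : ℕ}
    (h : M.StepsN c d m) : M.Steps c d := by
  induction h with
  | refl c => exact .refl
  | seq hs _ ih => exact .head (Or.inl hs) ih
  | jump hs _ ih => exact .head (Or.inr hs) ih

theorem Steps.stepsN {M : DFAwtl Q V} {c d : Q × List V}
    (h : M.Steps c d) : ∃ m, M.StepsN c d m := by
  unfold Steps at h
  induction h using Relation.ReflTransGen.head_induction_on with
  | refl => exact ⟨0, .refl _⟩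
  | head hs _ ih =>
    obtain ⟨m, hm⟩ := ih
    rcases hs with hs | hs
    · exact ⟨m, .seq hs hm⟩
    · exact ⟨m + 1, .jump hs hm⟩

theorem split_unique {P : V → Prop} {x x' y y' : List V} {a a' : V}
    (h : x ++ a :: y = x' ++ a' :: y') (hx : ∀ b ∈ x, P b) (hx' : ∀ b ∈ x', P b)
    (ha : ¬ P a) (ha' : ¬ P a') : x = x' ∧ a = a' ∧ y = y' := by
  induction x generalizing x' with
  | nil =>
    cases x' with
    | nil => simpa using h
    | cons c x' =>
      simp only [List.nil_append, List.cons_append, List.cons.injEq] at h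
      exact absurd (h.1 ▸ hx' c (by simp)) ha
  | cons c x ih =>
    cases x' with
    | nil =>
      simp only [List.nil_append, List.cons_append, List.cons.injEq] at h
      exact absurd (h.1 ▸ hx c (by simp)) ha'
    | cons c' x' =>
      simp only [List.cons_append, List.cons.injEq] at h
      obtain ⟨h1, h2, h3⟩ := ih h.2 (fun b hb => hx b (by simp [hb]))
        (fun b hb => hx' b (by simp [hb]))
      exact ⟨by rw [h.1, h1], h2, h3⟩

theorem seq_det {M : DFAwtl Q V} {c d d' : Q × List V}
    (h : M.SeqStep c d) (h' : M.SeqStep c d') : d = d' := by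
  obtain ⟨a, h1, h2⟩ := h
  obtain ⟨a', h1', h2'⟩ := h'
  rw [h1, List.cons.injEq] at h1'
  obtain ⟨rfl, h3⟩ := h1'
  rw [h2, Option.some.injEq] at h2'
  exact Prod.ext h2' h3

theorem seq_jump {M : DFAwtl Q V} {c d d' : Q × List V}
    (h : M.SeqStep c d) (h' : M.JumpStep c d') : False := by
  obtain ⟨a, h1, h2⟩ := h
  obtain ⟨x, y, a', hx, h1', _, _, h5⟩ := h'
  cases x with
  | nil => exact hx rfl
  | cons b x =>
    rw [h1, List.cons_append, List.cons.injEq] at h1'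
    have := h5 b (by simp)
    rw [← h1'.1, h2] at this
    cases this

theorem jump_det {M : DFAwtl Q V} {c d d' : Q × List V}
    (h : M.JumpStep c d) (h' : M.JumpStep c d') : d = d' := by
  obtain ⟨x, y, a, hx, h1, h2, h3, h4⟩ := h
  obtain ⟨x', y', a', hx', h1', h2', h3', h4'⟩ := h'
  obtain ⟨rfl, rfl, rfl⟩ := split_unique (P := fun b => M.delta c.1 b = none)
    (h1.symm.trans h1') h4 h4' (by simp [h3]) (by simp [h3'])
  rw [h3, Option.some.injEq] at h3'
  exact Prod.ext h3' (h2.trans h2'.symm)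

theorem no_step_nil {M : DFAwtl Q V} {f : Q} {d : Q × List V} :
    ¬ M.SeqStep (f, []) d ∧ ¬ M.JumpStep (f, []) d := by
  constructor
  · rintro ⟨a, h, _⟩
    simp at h
  · rintro ⟨x, y, a, _, h, _⟩
    simp at h

theorem no_step_nil' {M : DFAwtl Q V} {c d : Q × List V} (h : c.2 = []) :
    ¬ M.SeqStep c d ∧ ¬ M.JumpStep c d := by
  obtain ⟨q, u⟩ := c
  change u = [] at h
  subst h
  exact no_step_nil

theorem StepsN.unique {M : DFAwtl Q V} {c e e' : Q × List V} {m n : ℕ}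
    (h : M.StepsN c e m) (h' : M.StepsN c e' n) (he : e.2 = []) (he' : e'.2 = []) :
    m = n := by
  induction h generalizing n with
  | refl c =>
    obtain ⟨q, u⟩ := c
    simp only at he
    subst he
    cases h' with
    | refl => rfl
    | seq hs _ => exact absurd hs no_step_nil.1
    | jump hs _ => exact absurd hs no_step_nil.2
  | @seq c c1 c2 k hs _ ih =>
    cases h' with
    | refl =>
      exact absurd hs (no_step_nil' he').1
    | seq hs' h2 => exact ih (seq_det hs hs' ▸ h2) he
    | jump hs' _ => exact (seq_jump hs hs').elim
  | @jump c c1 c2 k hs _ ih =>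
    cases h' with
    | refl =>
      exact absurd hs (no_step_nil' he').2
    | seq hs' _ => exact (seq_jump hs' hs).elim
    | jump hs' h2 => rw [ih (jump_det hs hs' ▸ h2) he]

theorem StepsN.le_length {M : DFAwtl Q V} {c e : Q × List V} {m : ℕ}
    (h : M.StepsN c e m) : m ≤ c.2.length := by
  induction h with
  | refl c => simp
  | seq hs _ ih =>
    obtain ⟨a, h, _⟩ := hs
    rw [h]; simp; omega
  | jump hs _ ih =>
    obtain ⟨x, y, a, _, h, h', _⟩ := hs
    rw [h' ] at ih
    rw [h]; simp at ih ⊢; omega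

theorem AcceptsIn.jc_eq {M : DFAwtl Q V} {w : List V} {k : ℕ} (h : M.AcceptsIn w k) :
    M.jc w = k := by
  have : {k | M.AcceptsIn w k} = {k} := by
    ext j
    simp only [Set.mem_ofPred_eq, Set.mem_singleton_iff]
    constructor
    · rintro ⟨f, _, hf⟩
      obtain ⟨f', _, hf'⟩ := h
      exact hf.unique hf' rfl rfl
    · rintro rfl; exact h
  rw [jc, this, csInf_singleton]

theorem mem_lang_iff {M : DFAwtl Q V} {w : List V} : w ∈ M.lang ↔ M.AcceptsIn w (M.jc w) := by
  constructor
  · rintro ⟨f, hf, h⟩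
    obtain ⟨m, hm⟩ := h.stepsN
    have : M.AcceptsIn w m := ⟨f, hf, hm⟩
    rwa [this.jc_eq]
  · rintro ⟨f, hf, h⟩
    exact ⟨f, hf, h.steps⟩

theorem jc_le_length {M : DFAwtl Q V} {w : List V} (h : w ∈ M.lang) : M.jc w ≤ w.length := by
  obtain ⟨f, _, h⟩ := mem_lang_iff.1 h
  exact h.le_length

/-- Pigeonhole. -/
theorem StepsN.pigeon {M : DFAwtl Q V} {c e : Q × List V} {m : ℕ} (h : M.StepsN c e m) :
    (∃ s u d u', M.Steps c (s, u) ∧ M.JumpStep (s, u) d ∧ M.Steps d (s, u') ∧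
      M.Steps (s, u') e) ∨
    ∃ T : Finset Q, T.card = m + 1 ∧ ∀ t ∈ T, ∃ u', M.Steps c (t, u') ∧ M.Steps (t, u') e := by
  classical
  induction h with
  | refl c =>
    refine Or.inr ⟨{c.1}, by simp, ?_⟩
    intro t ht
    rw [Finset.mem_singleton] at ht
    subst ht
    exact ⟨c.2, .refl, .refl⟩
  | seq hs _ ih =>
    rcases ih with ⟨s, u, d, u', h1, h2⟩ | ⟨T, hT, h⟩
    · exact Or.inl ⟨s, u, d, u', .head (Or.inl hs) h1, h2⟩
    · refine Or.inr ⟨T, hT, fun t ht => ?_⟩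
      obtain ⟨u', h1, h2⟩ := h t ht
      exact ⟨u', .head (Or.inl hs) h1, h2⟩
  | @jump c c1 e k hs hr ih =>
    rcases ih with ⟨s, u, d, u', h1, h2⟩ | ⟨T, hT, h⟩
    · exact Or.inl ⟨s, u, d, u', .head (Or.inr hs) h1, h2⟩
    · by_cases hc : c.1 ∈ T
      · obtain ⟨u', h1, h2⟩ := h _ hc
        exact Or.inl ⟨c.1, c.2, c1, u', .refl, hs, h1, h2⟩
      · refine Or.inr ⟨insert c.1 T, by rw [Finset.card_insert_of_notMem hc, hT], ?_⟩
        intro t ht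
        rcases Finset.mem_insert.1 ht with rfl | ht
        · exact ⟨c.2, .refl, .head (Or.inr hs) hr.steps⟩
        · obtain ⟨u', h1, h2⟩ := h t ht
          exact ⟨u', .head (Or.inr hs) h1, h2⟩

theorem Steps.read {M : DFAwtl Q V} {c e : Q × List V} (h : M.Steps c e) :
    ∃ v : List V, ∀ t, ∃ k, M.StepsN (c.1, v ++ t) (e.1, t) k := by
  unfold Steps at h
  induction h using Relation.ReflTransGen.head_induction_on with
  | refl => exact ⟨[], fun t => ⟨0, .refl _⟩⟩
  | @head c d hs _ ih =>
    obtain ⟨v, hv⟩ := ih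
    have : ∃ a, M.delta c.1 a = some d.1 := by
      rcases hs with ⟨a, _, h⟩ | ⟨x, y, a, _, _, _, h, _⟩ <;> exact ⟨a, h⟩
    obtain ⟨a, ha⟩ := this
    refine ⟨a :: v, fun t => ?_⟩
    obtain ⟨k, hk⟩ := hv t
    exact ⟨k, .seq (c' := (d.1, v ++ t)) ⟨a, rfl, ha⟩ hk⟩

theorem jump_one {M : DFAwtl Q V} {p p' : Q} {a b : V} (t : List V)
    (ha : M.delta p a = some p') (hb : M.delta p b = none) :
    M.JumpStep (p, b :: a :: t) (p', b :: t) :=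
  ⟨[b], t, a, by simp, rfl, rfl, ha, by simpa using hb⟩

theorem Steps.loop {M : DFAwtl Q V} {c e : Q × List V} (h : M.Steps c e) (b : V) (y : List V)
    (hc : c.2 = b :: y) :
    (∃ y' l, e.2 = b :: y' ∧ ∀ t, ∃ k, M.StepsN (c.1, b :: (l ++ t)) (e.1, b :: t) k) ∨
    (∃ z, ∀ t, ∃ k, M.StepsN (c.1, b :: (z ++ t)) (e.1, t) k) := by
  unfold Steps at h
  induction h using Relation.ReflTransGen.head_induction_on generalizing y with
  | refl => exact Or.inl ⟨y, [], hc, fun t => ⟨0, .refl _⟩⟩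
  | @head c d hs hr ih =>
    rcases hs with ⟨a, h1, h2⟩ | ⟨x, y1, a, hx, h1, h2, h3, h4⟩
    · rw [hc, List.cons.injEq] at h1
      obtain ⟨rfl, -⟩ := h1
      obtain ⟨z, hz⟩ := Steps.read (M := M) hr
      refine Or.inr ⟨z, fun t => ?_⟩
      obtain ⟨k, hk⟩ := hz t
      exact ⟨k, .seq (c' := (d.1, z ++ t)) ⟨b, rfl, h2⟩ hk⟩
    · cases x with
      | nil => exact (hx rfl).elim
      | cons b' x =>
        rw [hc, List.cons_append, List.cons.injEq] at h1
        obtain ⟨rfl, -⟩ := h1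
        have hb := h4 b (by simp)
        rcases ih (x ++ y1) h2 with ⟨y', l, he, hl⟩ | ⟨z, hz⟩
        · refine Or.inl ⟨y', a :: l, he, fun t => ?_⟩
          obtain ⟨k, hk⟩ := hl t
          exact ⟨k + 1, .jump (jump_one _ h3 hb) hk⟩
        · refine Or.inr ⟨a :: z, fun t => ?_⟩
          obtain ⟨k, hk⟩ := hz t
          exact ⟨k + 1, .jump (jump_one _ h3 hb) hk⟩

theorem jump_loop {M : DFAwtl Q V} {s : Q} {u u' : List V} {d : Q × List V}
    (hj : M.JumpStep (s, u) d) (h : M.Steps d (s, u')) :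
    ∃ g x y', x ≠ [] ∧ u' = g ++ y' ∧
      ∀ t, ∃ k, 1 ≤ k ∧ M.StepsN (s, g ++ (x ++ t)) (s, g ++ t) k := by
  obtain ⟨x, y, a, hx, h1, h2, h3, h4⟩ := hj
  cases x with
  | nil => exact (hx rfl).elim
  | cons b x =>
    have hb := h4 b (by simp)
    rcases h.loop b (x ++ y) h2 with ⟨y', l, he, hl⟩ | ⟨z, hz⟩
    · refine ⟨[b], a :: l, y', by simp, he, fun t => ?_⟩
      obtain ⟨k, hk⟩ := hl t
      exact ⟨k + 1, by omega, .jump (jump_one _ h3 hb) hk⟩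
    · refine ⟨[], b :: a :: z, u', by simp, rfl, fun t => ?_⟩
      obtain ⟨k, hk⟩ := hz t
      exact ⟨k + 1, by omega, .jump (jump_one _ h3 hb) hk⟩

theorem iterate_loop {M : DFAwtl Q V} {s : Q} {g x : List V}
    (h : ∀ t, ∃ k, 1 ≤ k ∧ M.StepsN (s, g ++ (x ++ t)) (s, g ++ t) k) (n : ℕ) (t : List V) :
    ∃ k, n ≤ k ∧ M.StepsN (s, g ++ ((List.replicate n x).flatten ++ t)) (s, g ++ t) k := by
  induction n with
  | zero => exact ⟨0, le_rfl, .refl _⟩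
  | succ n ih =>
    obtain ⟨k, hk, hk'⟩ := ih
    obtain ⟨j, hj, hj'⟩ := h ((List.replicate n x).flatten ++ t)
    refine ⟨j + k, by omega, ?_⟩
    have := hj'.trans' hk'
    simpa [List.replicate_succ] using this

end DFAwtl

open DFAwtl in
theorem pump_main {Q V : Type*} [Fintype Q] (M : DFAwtl Q V)
    (hw : ∃ w ∈ M.lang, Fintype.card Q ≤ M.jc w) :
    ∃ (α β x : List V), x ≠ [] ∧ ∀ n : ℕ, 1 ≤ n →
        α ++ (List.replicate n x).flatten ++ β ∈ M.lang ∧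
          n ≤ M.jc (α ++ (List.replicate n x).flatten ++ β) := by
  obtain ⟨w, hw, hc⟩ := hw
  obtain ⟨f, hf, h⟩ := mem_lang_iff.1 hw
  rcases h.pigeon with ⟨s, u, d, u', h1, h2, h3, h4⟩ | ⟨T, hT, -⟩
  · obtain ⟨v, hv⟩ := h1.read
    obtain ⟨g, x, y', hx, rfl, hl⟩ := jump_loop h2 h3
    obtain ⟨k4, h4⟩ := h4.stepsN
    refine ⟨v ++ g, y', x, hx, fun n _ => ?_⟩
    obtain ⟨k1, hk1⟩ := hv (g ++ ((List.replicate n x).flatten ++ y'))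
    obtain ⟨k2, hk2, hk2'⟩ := iterate_loop hl n y'
    have hA : M.AcceptsIn (v ++ g ++ (List.replicate n x).flatten ++ y') (k1 + (k2 + k4)) := by
      refine ⟨f, hf, ?_⟩
      have := hk1.trans' (hk2'.trans' h4)
      simpa [List.append_assoc] using this
    have hj := hA.jc_eq
    refine ⟨mem_lang_iff.2 (hj ▸ hA), ?_⟩
    rw [hj]; omega
  · have := T.card_le_univ
    omega

/-- if `M` accepts some input with at least `#Q` jumps, then there are
words `α, β` and a nonempty `x` such that each `α·xⁿ·β` is accepted with at least
`n` jumps; consequently `JC_M(n) ∈ Ω(n)`. -/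
theorem stmt_8 {Q V : Type*} [Fintype Q] [Fintype V] (M : DFAwtl Q V)
    (hw : ∃ w ∈ M.lang, Fintype.card Q ≤ M.jc w) :
    (∃ (α β x : List V), x ≠ [] ∧ ∀ n : ℕ, 1 ≤ n →
        α ++ (List.replicate n x).flatten ++ β ∈ M.lang ∧
          n ≤ M.jc (α ++ (List.replicate n x).flatten ++ β)) ∧
      ∃ c : ℝ, 0 < c ∧ ∀ N : ℕ, ∃ n ≥ N,
        (∃ w ∈ M.lang, w.length = n) ∧ c * (n : ℝ) ≤ (M.JC n : ℝ) := by
  have hmain := pump_main M hw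
  refine ⟨hmain, ?_⟩
  obtain ⟨α, β, x, hx, h⟩ := hmain
  have hxl : 0 < x.length := List.length_pos_iff.2 hx
  set C : ℕ := α.length + β.length + x.length with hC
  have hCpos : (0 : ℝ) < (C : ℝ) := by
    have : 0 < C := by omega
    exact_mod_cast this
  refine ⟨1 / (C : ℝ), by positivity, fun N => ?_⟩
  obtain ⟨hm, hj⟩ := h (N + 1) (by omega)
  set w := α ++ (List.replicate (N + 1) x).flatten ++ β with hwdef
  have hlen : w.length = α.length + (N + 1) * x.length + β.length := by
    simp [hwdef]; ring
  have hge : N ≤ w.length := by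
    rw [hlen]; nlinarith
  have hle : w.length ≤ (N + 1) * C := by
    rw [hlen, hC]; nlinarith [Nat.zero_le (N * α.length), Nat.zero_le (N * β.length)]
  refine ⟨w.length, hge, ⟨w, hm, rfl⟩, ?_⟩
  have hJ : M.jc w ≤ M.JC w.length := by
    refine le_csSup ⟨w.length, ?_⟩ ⟨w, hm, rfl, rfl⟩
    rintro k ⟨w', hw', hl, rfl⟩
    exact hl ▸ DFAwtl.jc_le_length hw'
  have h1 : (w.length : ℝ) ≤ (M.JC w.length : ℝ) * C := by
    have : w.length ≤ M.JC w.length * C := hle.trans (Nat.mul_le_mul_right _ (hj.trans hJ))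
    exact_mod_cast this
  rw [one_div, inv_mul_le_iff₀ hCpos]
  linarith
end

section
/- Let M be a DFAwtl and let w∈L(M) with jc_M(w)=n≥1. Then there exists a word w′∈L(M) which is a rearrangement of w (obtained from w by moving one occurrence of a single letter to an earlier position, so in particular |w′|=|w| and w′ has the same multiset of letters as w) such that jc_M(w′)=n−1. -/
-- end preamble

namespace DFAwtl

theorem aux_split {Q V : Type*} {M : DFAwtl Q V} (q : Q) (x y x' y' : List V) (a a' : V)
    (h : x ++ a :: y = x' ++ a' :: y') (ha : M.delta q a ≠ none) (ha' : M.delta q a' ≠ none)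
    (hx : ∀ b ∈ x, M.delta q b = none) (hx' : ∀ b ∈ x', M.delta q b = none) :
    x = x' ∧ a = a' ∧ y = y' := by
  induction x generalizing x' with
  | nil =>
    cases x' with
    | nil => simpa using h
    | cons b t =>
      simp only [List.nil_append, List.cons_append, List.cons.injEq] at h
      exact absurd (hx' a (by simp [h.1])) ha
  | cons b t ih =>
    cases x' with
    | nil =>
      simp only [List.nil_append, List.cons_append, List.cons.injEq] at h
      exact absurd (hx a' (by simp [h.1])) ha'
    | cons b' t' =>
      simp only [List.cons_append, List.cons.injEq] at h
      have := ih t' h.2 (fun b hb => hx b (by simp [hb])) (fun b hb => hx' b (by simp [hb]))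
      simp [h.1, this]

theorem aux_seq_det {Q V : Type*} {M : DFAwtl Q V} {c d e : Q × List V}
    (h : M.SeqStep c d) (h' : M.SeqStep c e) : d = e := by
  obtain ⟨a, h1, h2⟩ := h
  obtain ⟨b, h3, h4⟩ := h'
  rw [h1] at h3
  obtain ⟨rfl, h5⟩ := List.cons.inj h3
  rw [h2] at h4
  exact Prod.ext (Option.some.inj h4) h5

theorem aux_seq_jump {Q V : Type*} {M : DFAwtl Q V} {c d e : Q × List V}
    (h : M.SeqStep c d) (h' : M.JumpStep c e) : False := by
  obtain ⟨a, h1, h2⟩ := h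
  obtain ⟨x, y, b, hx, h3, h4, h5, h6⟩ := h'
  rw [h1] at h3
  have := aux_split (M := M) c.1 [] d.2 x y a b h3 (by simp [h2]) (by simp [h5]) (by simp) h6
  exact hx this.1.symm

theorem aux_jump_det {Q V : Type*} {M : DFAwtl Q V} {c d e : Q × List V}
    (h : M.JumpStep c d) (h' : M.JumpStep c e) : d = e := by
  obtain ⟨x, y, a, -, h3, h4, h5, h6⟩ := h
  obtain ⟨x', y', b, -, h3', h4', h5', h6'⟩ := h'
  rw [h3] at h3'
  obtain ⟨rfl, rfl, rfl⟩ := aux_split (M := M) c.1 x y x' y' a b h3'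
    (by simp [h5]) (by simp [h5']) h6 h6'
  rw [h5] at h5'
  exact Prod.ext (Option.some.inj h5') (h4.trans h4'.symm)

theorem aux_unique {Q V : Type*} {M : DFAwtl Q V} {c d e : Q × List V} {k l : ℕ}
    (h : M.StepsN c d k) (h' : M.StepsN c e l) (hd : d.2 = []) (he : e.2 = []) : k = l := by
  induction h generalizing l with
  | refl c =>
    cases h' with
    | refl => rfl
    | seq s _ => obtain ⟨a, h1, _⟩ := s; simp [hd] at h1
    | jump s _ => obtain ⟨x, y, a, _, h1, _⟩ := s; simp [hd] at h1
  | seq s t ih =>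
    cases h' with
    | refl => obtain ⟨a, h1, _⟩ := s; simp [he] at h1
    | seq s' t' => obtain rfl := aux_seq_det s s'; exact ih t' hd
    | jump s' t' => exact (aux_seq_jump s s').elim
  | jump s t ih =>
    cases h' with
    | refl => obtain ⟨x, y, a, _, h1, _⟩ := s; simp [he] at h1
    | seq s' t' => exact (aux_seq_jump s' s).elim
    | jump s' t' => obtain rfl := aux_jump_det s s'; rw [ih t' hd]

theorem aux_jc {Q V : Type*} {M : DFAwtl Q V} {w : List V} {k : ℕ}
    (h : M.AcceptsIn w k) : M.jc w = k := by
  have hs : {k | M.AcceptsIn w k} = {k} := by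
    ext l
    constructor
    · rintro ⟨f, _, hl⟩
      obtain ⟨g, _, hk⟩ := h
      exact aux_unique hl hk rfl rfl
    · rintro rfl
      exact h
  rw [jc, hs, csInf_singleton]

theorem aux_toN {Q V : Type*} {M : DFAwtl Q V} {c d : Q × List V}
    (h : M.Steps c d) : ∃ k, M.StepsN c d k := by
  unfold Steps at h
  induction h using Relation.ReflTransGen.head_induction_on with
  | refl => exact ⟨0, .refl _⟩
  | head s _ ih =>
    obtain ⟨k, hk⟩ := ih
    rcases s with s | s
    · exact ⟨k, .seq s hk⟩
    · exact ⟨k + 1, .jump s hk⟩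

theorem aux_ofN {Q V : Type*} {M : DFAwtl Q V} {c d : Q × List V} {k : ℕ}
    (h : M.StepsN c d k) : M.Steps c d := by
  induction h with
  | refl => exact .refl
  | seq s _ ih => exact .head (Or.inl s) ih
  | jump s _ ih => exact .head (Or.inr s) ih

theorem aux_main {Q V : Type*} {M : DFAwtl Q V} {c d : Q × List V} {k : ℕ}
    (h : M.StepsN c d k) (hk : 1 ≤ k) : ∃ (u x y : List V) (a : V), x ≠ [] ∧
      c.2 = u ++ x ++ a :: y ∧ M.StepsN (c.1, u ++ a :: (x ++ y)) d (k - 1) := by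
  induction h with
  | refl => omega
  | seq s _ ih =>
    obtain ⟨b, h1, h2⟩ := s
    obtain ⟨u, x, y, a, hx, h3, h4⟩ := ih hk
    refine ⟨b :: u, x, y, a, hx, by simp [h1, h3], ?_⟩
    have hs : M.SeqStep (_, b :: (u ++ a :: (x ++ y))) (_, u ++ a :: (x ++ y)) := ⟨b, rfl, h2⟩
    exact .seq hs h4
  | @jump c c' c'' n s t ih =>
    obtain ⟨x, y, a, hx, h1, h2, h3, h4⟩ := s
    refine ⟨[], x, y, a, hx, by simpa using h1, .seq (c' := c') ⟨a, by simp [h2], h3⟩ t⟩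

end DFAwtl

/-- if `w ∈ L(M)` is accepted with `n ≥ 1` jumps, then moving one
occurrence of a single letter of `w` to an earlier position yields a word
`w' ∈ L(M)` accepted with exactly `n − 1` jumps. -/
theorem stmt_17 {Q V : Type*} [Fintype Q] [Fintype V] (M : DFAwtl Q V)
    (w : List V) (hw : w ∈ M.lang) (n : ℕ) (hn : M.jc w = n) (h1 : 1 ≤ n) :
    ∃ (u v₁ v₂ : List V) (c : V), v₁ ≠ [] ∧ w = u ++ v₁ ++ c :: v₂ ∧
      (u ++ c :: (v₁ ++ v₂)) ∈ M.lang ∧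
      M.jc (u ++ c :: (v₁ ++ v₂)) = n - 1 := by
  obtain ⟨f, hf, hs⟩ := hw
  obtain ⟨k, hk⟩ := DFAwtl.aux_toN hs
  have hkn : k = n := (DFAwtl.aux_jc ⟨f, hf, hk⟩).symm.trans hn
  subst hkn
  obtain ⟨u, x, y, a, hx, h3, h4⟩ := DFAwtl.aux_main hk h1
  exact ⟨u, x, y, a, hx, h3, ⟨f, hf, DFAwtl.aux_ofN h4⟩, DFAwtl.aux_jc ⟨f, hf, h4⟩⟩
end
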